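/- For i = 1,2 let (Λᵢ, Wᵢ, 𝓜ᵢ) satisfy Hartwig's assumptions: Λᵢ an integrally closed integral domain and commutative ℂ-algebra, Wᵢ a finite group of ℂ-algebra automorphisms of Λᵢ, 𝓜ᵢ a submonoid of the group of automorphisms of Λᵢ with (𝓜ᵢ𝓜ᵢ⁻¹) ∩ Wᵢ = {1}, w∘μ∘w⁻¹ ∈ 𝓜ᵢ for all w ∈ Wᵢ and μ ∈ 𝓜ᵢ, and Λᵢ Noetherian as a module over Γᵢ = Λᵢ^{Wᵢ}. Let 𝒰ᵢ ⊆ 𝒦ᵢ = (Lᵢ#𝓜ᵢ)^{Wᵢ} be a principal Galois Γᵢ-order: a finitely generated Γᵢ-subring with Kᵢ·𝒰ᵢ = 𝒰ᵢ·Kᵢ = 𝒦ᵢ (Kᵢ = Lᵢ^{Wᵢ}) such that X(γ) ∈ Γᵢ for all X ∈ 𝒰ᵢ and γ ∈ Γᵢ. Assume Λ = Λ₁ ⊗_ℂ Λ₂ is an integral domain, and let ψ be the canonical embedding of (L₁#Ŵ₁) ⊗_ℂ (L₂#Ŵ₂) into L#Ŵ for the product data (Λ, W₁×W₂, 𝓜₁×𝓜₂).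 Then ψ(𝒰₁ ⊗_ℂ 𝒰₂) is a principal Galois (Γ₁⊗_ℂΓ₂)-order in 𝒦 = (L#(𝓜₁×𝓜₂))^{W₁×W₂}: it is a finitely generated (Γ₁⊗_ℂΓ₂)-subring of 𝒦, satisfies K·ψ(𝒰₁⊗𝒰₂) = ψ(𝒰₁⊗𝒰₂)·K = 𝒦 where K = L^{W₁×W₂}, and every X ∈ ψ(𝒰₁⊗𝒰₂) satisfies X(γ) ∈ Γ₁⊗_ℂΓ₂ for all γ ∈ Γ₁⊗_ℂΓ₂. -/

import Mathlib

/-!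
Statement 14: Given two sets of Galois order data (Λᵢ, Wᵢ, 𝓜ᵢ) satisfying Hartwig's
assumptions (Λᵢ integrally closed domains, Wᵢ finite groups of automorphisms, 𝓜ᵢ submonoids
of automorphisms with separation (𝓜ᵢ𝓜ᵢ⁻¹) ∩ Wᵢ = 1 and Wᵢ-invariance, Λᵢ Noetherian over
Γᵢ = Λᵢ^{Wᵢ}) and principal Galois Γᵢ-orders 𝒰ᵢ ⊆ 𝒦ᵢ = (Lᵢ#𝓜ᵢ)^{Wᵢ}, the image
ψ(𝒰₁ ⊗_ℂ 𝒰₂) under the canonical embedding is a principal Galois (Γ₁⊗_ℂΓ₂)-order in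
𝒦 = (L#(𝓜₁×𝓜₂))^{W₁×W₂} for the product data.
-/

set_option synthInstance.maxHeartbeats 1000000
set_option maxHeartbeats 4000000

open scoped TensorProduct

noncomputable section

/-- `gen f w` is the ℂ-linear endomorphism `m_f ∘ w` of `L`. -/
def gen {L : Type*} [Field L] [Algebra ℂ L] (f : L) (w : L ≃ₐ[ℂ] L) : Module.End ℂ L :=
  (LinearMap.mulLeft ℂ f) ∘ₗ (w.toLinearMap)

/-- The skew monoid ring `L # W` realized inside `End_ℂ(L)`. -/
def skew {L : Type*} [Field L] [Algebra ℂ L] (W : Submonoid (L ≃ₐ[ℂ] L)) :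
    Subalgebra ℂ (Module.End ℂ L) :=
  Algebra.adjoin ℂ { X | ∃ (f : L) (w : L ≃ₐ[ℂ] L), w ∈ W ∧ X = gen f w }

lemma gen_mem_skew {L : Type*} [Field L] [Algebra ℂ L] {W : Submonoid (L ≃ₐ[ℂ] L)}
    (f : L) {w : L ≃ₐ[ℂ] L} (hw : w ∈ W) : gen f w ∈ skew W :=
  Algebra.subset_adjoin ⟨f, w, hw, rfl⟩

/-- The fixed subalgebra `Γ = Λ^W`. -/
def fixedSub {L : Type*} [Field L] [Algebra ℂ L] (Λ : Subalgebra ℂ L)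
    (W : Subgroup (L ≃ₐ[ℂ] L)) : Subalgebra ℂ L where
  carrier := {x | x ∈ Λ ∧ ∀ w ∈ W, w x = x}
  mul_mem' := fun ha hb => ⟨mul_mem ha.1 hb.1,
    fun w hw => by rw [map_mul, ha.2 w hw, hb.2 w hw]⟩
  one_mem' := ⟨one_mem _, fun w _ => map_one w⟩
  add_mem' := fun ha hb => ⟨add_mem ha.1 hb.1,
    fun w hw => by rw [map_add, ha.2 w hw, hb.2 w hw]⟩
  zero_mem' := ⟨zero_mem _, fun w _ => map_zero w⟩
  algebraMap_mem' := fun c => ⟨Λ.algebraMap_mem c, fun w _ => w.commutes c⟩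

/-- The fixed subfield `K = L^W` (as a set). -/
def fixedSet {L : Type*} [Field L] [Algebra ℂ L] (W : Subgroup (L ≃ₐ[ℂ] L)) : Set L :=
  {x | ∀ w ∈ W, w x = x}

/-- `Λ` as a module over a subalgebra `Γ' ≤ Λ`. -/
def lambdaOver {L : Type*} [Field L] [Algebra ℂ L] (Λ Γ' : Subalgebra ℂ L)
    (h : ∀ x ∈ Γ', x ∈ Λ) : Submodule ↥Γ' L where
  carrier := Λ
  add_mem' := fun ha hb => add_mem ha hb
  zero_mem' := zero_mem _
  smul_mem' := fun c x hx => by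
    have h1 : (c : L) * x ∈ Λ := mul_mem (h (c : L) c.2) hx
    simpa [Algebra.smul_def, Subalgebra.algebraMap_eq] using h1

/-- `𝒦 = (L#𝓜)^W`: the `W`-conjugation-invariant elements of the skew monoid ring `L#𝓜`. -/
def conjInv {L : Type*} [Field L] [Algebra ℂ L] (M : Submonoid (L ≃ₐ[ℂ] L))
    (W : Subgroup (L ≃ₐ[ℂ] L)) : Set (Module.End ℂ L) :=
  {X | X ∈ skew M ∧ ∀ w : L ≃ₐ[ℂ] L, w ∈ W → gen 1 w * X * gen 1 w⁻¹ = X}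

/-- The set of products `m_k ∘ X`, `k ∈ K`, `X ∈ U` (so that `K·U` is its span). -/
def leftMulSet {L : Type*} [Field L] [Algebra ℂ L] (K : Set L) (U : Set (Module.End ℂ L)) :
    Set (Module.End ℂ L) :=
  {Z | ∃ k ∈ K, ∃ X ∈ U, Z = (LinearMap.mulLeft ℂ k) ∘ₗ X}

/-- The set of products `X ∘ m_k`, `k ∈ K`, `X ∈ U` (so that `U·K` is its span). -/
def rightMulSet {L : Type*} [Field L] [Algebra ℂ L] (K : Set L) (U : Set (Module.End ℂ L)) :
    Set (Module.End ℂ L) :=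
  {Z | ∃ k ∈ K, ∃ X ∈ U, Z = X ∘ₗ (LinearMap.mulLeft ℂ k)}

/-- The multiplication operators `m_γ`, `γ ∈ Γ`. -/
def gammaMulSet {L : Type*} [Field L] [Algebra ℂ L] (Γ' : Subalgebra ℂ L) :
    Set (Module.End ℂ L) :=
  {Z | ∃ γ ∈ Γ', Z = gen γ 1}

/-- The submonoid `Ŵ = ⟨W, 𝓜⟩` generated by `W` and `𝓜`. -/
def genMon {L₀ : Type*} [Field L₀] [Algebra ℂ L₀] (W : Subgroup (L₀ ≃ₐ[ℂ] L₀))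
    (M : Submonoid (L₀ ≃ₐ[ℂ] L₀)) : Submonoid (L₀ ≃ₐ[ℂ] L₀) :=
  Submonoid.closure ((W : Set (L₀ ≃ₐ[ℂ] L₀)) ∪ (M : Set (L₀ ≃ₐ[ℂ] L₀)))

/-- `Λ = Λ₁ ⊗ Λ₂`, realized inside `L` as the subalgebra generated by `ι₁(Λ₁) ∪ ι₂(Λ₂)`. -/
def tensorSub {L₁ L₂ L : Type*} [Field L₁] [Algebra ℂ L₁] [Field L₂] [Algebra ℂ L₂]
    [Field L] [Algebra ℂ L] (Λ₁ : Subalgebra ℂ L₁) (Λ₂ : Subalgebra ℂ L₂)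
    (ι₁ : L₁ →ₐ[ℂ] L) (ι₂ : L₂ →ₐ[ℂ] L) : Subalgebra ℂ L :=
  Algebra.adjoin ℂ ((ι₁ '' (Λ₁ : Set L₁)) ∪ (ι₂ '' (Λ₂ : Set L₂)))

/-- The span of pure tensors `X₁ ⊗ X₂` with `Xᵢ ∈ Uᵢ`; this realizes `𝒰₁ ⊗_ℂ 𝒰₂`. -/
def pureSpan {L₁ L₂ : Type*} [Field L₁] [Algebra ℂ L₁] [Field L₂] [Algebra ℂ L₂]
    (W₁' : Submonoid (L₁ ≃ₐ[ℂ] L₁)) (W₂' : Submonoid (L₂ ≃ₐ[ℂ] L₂))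
    (F₁ : Set (Module.End ℂ L₁)) (F₂ : Set (Module.End ℂ L₂)) :
    Submodule ℂ (↥(skew W₁') ⊗[ℂ] ↥(skew W₂')) :=
  Submodule.span ℂ {t | ∃ (X₁ : skew W₁') (X₂ : skew W₂'),
    ((X₁ : Module.End ℂ L₁) ∈ F₁) ∧ ((X₂ : Module.End ℂ L₂) ∈ F₂) ∧ t = X₁ ⊗ₜ[ℂ] X₂}

section SkewMonoidRing

variable {L : Type*} [Field L] [Algebra ℂ L]

lemma gen_apply (f : L) (w : L ≃ₐ[ℂ] L) (x : L) : gen f w x = f * w x := rfl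

lemma gen_mul_gen (f g : L) (v w : L ≃ₐ[ℂ] L) :
    gen f v * gen g w = gen (f * v g) (v * w) := by
  ext x
  simp [gen_apply, mul_assoc]

lemma gen_one_one : gen (1 : L) 1 = 1 := by
  ext x
  simp [gen_apply]

lemma gen_add (f g : L) (w : L ≃ₐ[ℂ] L) : gen (f + g) w = gen f w + gen g w := by
  ext x
  simp [gen_apply, add_mul]

lemma gen_smul (c : ℂ) (f : L) (w : L ≃ₐ[ℂ] L) : gen (c • f) w = c • gen f w := by
  ext x
  simp [gen_apply]

lemma gen_zero (w : L ≃ₐ[ℂ] L) : gen (0 : L) w = 0 := by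
  ext x
  simp [gen_apply]

lemma mulLeft_comp_eq_gen_mul (k : L) (X : Module.End ℂ L) :
    (LinearMap.mulLeft ℂ k) ∘ₗ X = gen k 1 * X := rfl

lemma comp_mulLeft_eq_mul_gen (k : L) (X : Module.End ℂ L) :
    X ∘ₗ (LinearMap.mulLeft ℂ k) = X * gen k 1 := rfl

lemma span_gen_eq_top (W : Submonoid (L ≃ₐ[ℂ] L)) :
    Submodule.span ℂ {X : skew W | ∃ (f : L) (w : L ≃ₐ[ℂ] L) (hw : w ∈ W),
      X = ⟨gen f w, gen_mem_skew f hw⟩} = ⊤ := by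
  set S : Set (skew W) := {X | ∃ (f : L) (w : L ≃ₐ[ℂ] L) (hw : w ∈ W),
      X = ⟨gen f w, gen_mem_skew f hw⟩} with hS
  have hmul : Submodule.span ℂ S * Submodule.span ℂ S ≤ Submodule.span ℂ S := by
    rw [Submodule.span_mul_span]
    refine Submodule.span_mono ?_
    rintro _ ⟨_, ⟨f, v, hv, rfl⟩, _, ⟨g, w, hw, rfl⟩, rfl⟩
    exact ⟨f * v g, v * w, mul_mem hv hw, Subtype.ext (gen_mul_gen f g v w)⟩
  rw [eq_top_iff]
  rintro ⟨X, hX⟩ -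
  induction hX using Algebra.adjoin_induction with
  | mem x hx =>
    obtain ⟨f, w, hw, rfl⟩ := hx
    exact Submodule.subset_span ⟨f, w, hw, rfl⟩
  | algebraMap c =>
    refine Submodule.subset_span ⟨c • 1, 1, one_mem W, Subtype.ext ?_⟩
    simp [gen_smul, gen_one_one, Algebra.algebraMap_eq_smul_one]
  | add x y hx hy ihx ihy => exact add_mem ihx ihy
  | mul x y hx hy ihx ihy => exact hmul (Submodule.mul_mem_mul ihx ihy)

/-- An additive property of elements of `L # W` may be checked on the operators `m_f ∘ w`. -/
lemma skew_induction {W : Submonoid (L ≃ₐ[ℂ] L)} {p : skew W → Prop}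
    (gen : ∀ (f : L) (w : L ≃ₐ[ℂ] L) (hw : w ∈ W), p ⟨gen f w, gen_mem_skew f hw⟩)
    (add : ∀ X Y, p X → p Y → p (X + Y)) (X : skew W) : p X := by
  have hX : X ∈ Submodule.span ℂ {X : skew W | ∃ (f : L) (w : L ≃ₐ[ℂ] L) (hw : w ∈ W),
      X = ⟨_root_.gen f w, gen_mem_skew f hw⟩} := by
    rw [span_gen_eq_top]
    trivial
  induction hX using Submodule.closure_induction with
  | zero =>
    have h := gen 0 1 (one_mem W)
    simp only [gen_zero] at h
    exact h
  | add X Y _ _ hX hY => exact add X Y hX hY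
  | smul_mem c X hX =>
    obtain ⟨f, w, hw, rfl⟩ := hX
    have h := gen (c • f) w hw
    simp only [gen_smul] at h
    exact h

lemma skew_mono {V W : Submonoid (L ≃ₐ[ℂ] L)} (h : V ≤ W) : skew V ≤ skew W := by
  refine Algebra.adjoin_mono ?_
  rintro _ ⟨f, w, hw, rfl⟩
  exact ⟨f, w, h hw, rfl⟩

/-- Conjugation by `w` as a linear map on `End_ℂ(L)`. -/
def conjBy (w : L ≃ₐ[ℂ] L) : Module.End ℂ L →ₗ[ℂ] Module.End ℂ L :=
  LinearMap.mulRight ℂ (gen 1 w⁻¹) ∘ₗ LinearMap.mulLeft ℂ (gen 1 w)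

lemma conjBy_apply (w : L ≃ₐ[ℂ] L) (X : Module.End ℂ L) :
    conjBy w X = gen 1 w * X * gen 1 w⁻¹ := rfl

lemma conjBy_gen (w : L ≃ₐ[ℂ] L) (f : L) (v : L ≃ₐ[ℂ] L) :
    conjBy w (gen f v) = gen (w f) (w * v * w⁻¹) := by
  simp [conjBy_apply, gen_mul_gen]

lemma conjBy_mul (w : L ≃ₐ[ℂ] L) (X Y : Module.End ℂ L) :
    conjBy w (X * Y) = conjBy w X * conjBy w Y := by
  have h : gen (1 : L) w⁻¹ * gen 1 w = 1 := by simp [gen_mul_gen, gen_one_one]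
  calc conjBy w (X * Y) = gen 1 w * X * 1 * Y * gen 1 w⁻¹ := by
        simp only [conjBy_apply, mul_assoc, one_mul]
    _ = conjBy w X * conjBy w Y := by
        rw [← h]
        simp only [conjBy_apply, mul_assoc]

lemma conjBy_conjBy (v w : L ≃ₐ[ℂ] L) (X : Module.End ℂ L) :
    conjBy v (conjBy w X) = conjBy (v * w) X := by
  have h1 : gen (1 : L) (v * w) = gen 1 v * gen 1 w := by simp [gen_mul_gen]
  have h2 : gen (1 : L) (v * w)⁻¹ = gen 1 w⁻¹ * gen 1 v⁻¹ := by simp [gen_mul_gen]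
  simp only [conjBy_apply, h1, h2, mul_assoc]

/-- The sum of all conjugates of an operator under a finite group acting on `L`. -/
def conjTrace {G : Type*} [Group G] [Fintype G] (ρ : G →* (L ≃ₐ[ℂ] L)) :
    Module.End ℂ L →ₗ[ℂ] Module.End ℂ L :=
  ∑ g, conjBy (ρ g)

lemma conjTrace_apply {G : Type*} [Group G] [Fintype G] (ρ : G →* (L ≃ₐ[ℂ] L))
    (X : Module.End ℂ L) : conjTrace ρ X = ∑ g, conjBy (ρ g) X := by
  simp [conjTrace]

lemma conjBy_conjTrace {G : Type*} [Group G] [Fintype G] (ρ : G →* (L ≃ₐ[ℂ] L)) (g : G)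
    (X : Module.End ℂ L) : conjBy (ρ g) (conjTrace ρ X) = conjTrace ρ X := by
  simp only [conjTrace_apply, map_sum, conjBy_conjBy, ← map_mul]
  exact Fintype.sum_equiv (Equiv.mulLeft g) _ _ fun _ => rfl

lemma conjTrace_mul_left {G : Type*} [Group G] [Fintype G] (ρ : G →* (L ≃ₐ[ℂ] L))
    {Y : Module.End ℂ L} (hY : ∀ g, conjBy (ρ g) Y = Y) (X : Module.End ℂ L) :
    conjTrace ρ (Y * X) = Y * conjTrace ρ X := by
  simp only [conjTrace_apply, conjBy_mul, hY, Finset.mul_sum]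

lemma conjTrace_mul_right {G : Type*} [Group G] [Fintype G] (ρ : G →* (L ≃ₐ[ℂ] L))
    {Y : Module.End ℂ L} (hY : ∀ g, conjBy (ρ g) Y = Y) (X : Module.End ℂ L) :
    conjTrace ρ (X * Y) = conjTrace ρ X * Y := by
  simp only [conjTrace_apply, conjBy_mul, hY, Finset.sum_mul]

/-- An invariant operator whose trace lies in a submodule lies in it. -/
lemma mem_of_conjTrace_mem {G : Type*} [Group G] [Fintype G] (ρ : G →* (L ≃ₐ[ℂ] L))
    {X : Module.End ℂ L} (hX : ∀ g, conjBy (ρ g) X = X)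
    {S : Submodule ℂ (Module.End ℂ L)} (h : conjTrace ρ X ∈ S) : X ∈ S := by
  have hc : (Fintype.card G : ℂ) ≠ 0 := Nat.cast_ne_zero.mpr Fintype.card_ne_zero
  have : conjTrace ρ X = (Fintype.card G : ℂ) • X := by
    simp [conjTrace_apply, hX, Nat.cast_smul_eq_nsmul]
  rw [this] at h
  exact (S.smul_mem_iff hc).mp h

lemma conjBy_mem_skew {M : Submonoid (L ≃ₐ[ℂ] L)} {w : L ≃ₐ[ℂ] L}
    (h : ∀ μ ∈ M, w * μ * w⁻¹ ∈ M) {X : Module.End ℂ L} (hX : X ∈ skew M) :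
    conjBy w X ∈ skew M := by
  refine skew_induction (p := fun X : skew M => conjBy w (X : Module.End ℂ L) ∈ skew M)
    (fun f v hv => ?_) (fun X Y hX hY => ?_) ⟨X, hX⟩
  · rw [conjBy_gen]
    exact gen_mem_skew _ (h v hv)
  · rw [Subalgebra.coe_add, map_add]
    exact add_mem hX hY

lemma conjTrace_mem_conjInv {M : Submonoid (L ≃ₐ[ℂ] L)} {W : Subgroup (L ≃ₐ[ℂ] L)} [Fintype W]
    (h : ∀ w ∈ W, ∀ μ ∈ M, w * μ * w⁻¹ ∈ M) {X : Module.End ℂ L} (hX : X ∈ skew M) :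
    conjTrace W.subtype X ∈ conjInv M W := by
  refine ⟨?_, fun w hw => conjBy_conjTrace W.subtype ⟨w, hw⟩ X⟩
  rw [conjTrace_apply]
  exact sum_mem fun g _ => conjBy_mem_skew (h g g.2) hX

lemma conjInv_mul_mem {M : Submonoid (L ≃ₐ[ℂ] L)} {W : Subgroup (L ≃ₐ[ℂ] L)}
    {X Y : Module.End ℂ L} (hX : X ∈ conjInv M W) (hY : Y ∈ conjInv M W) :
    X * Y ∈ conjInv M W := by
  refine ⟨mul_mem hX.1 hY.1, fun w hw => ?_⟩
  have hx : conjBy w X = X := hX.2 w hw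
  have hy : conjBy w Y = Y := hY.2 w hw
  rw [← conjBy_apply, conjBy_mul, hx, hy]

lemma gen_mem_conjInv {M : Submonoid (L ≃ₐ[ℂ] L)} {W : Subgroup (L ≃ₐ[ℂ] L)}
    {k : L} (hk : k ∈ fixedSet W) : gen k 1 ∈ conjInv M W := by
  refine ⟨gen_mem_skew k (one_mem M), fun w hw => ?_⟩
  rw [← conjBy_apply, conjBy_gen, hk w hw, mul_one, mul_inv_cancel]

/-- `𝒦 = (L#𝓜)^W` as a submodule of `End_ℂ(L)`. -/
def conjInvSubmodule (M : Submonoid (L ≃ₐ[ℂ] L)) (W : Subgroup (L ≃ₐ[ℂ] L)) :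
    Submodule ℂ (Module.End ℂ L) where
  carrier := conjInv M W
  add_mem' := fun {X Y} hX hY => ⟨add_mem hX.1 hY.1, fun w hw => by
    rw [mul_add, add_mul, hX.2 w hw, hY.2 w hw]⟩
  zero_mem' := ⟨zero_mem _, fun w _ => by simp⟩
  smul_mem' := fun c X hX => ⟨Subalgebra.smul_mem _ hX.1 c, fun w hw => by
    rw [mul_smul_comm, smul_mul_assoc, hX.2 w hw]⟩

lemma mul_mem_fixedSet {W : Subgroup (L ≃ₐ[ℂ] L)} {a b : L} (ha : a ∈ fixedSet W)
    (hb : b ∈ fixedSet W) : a * b ∈ fixedSet W := fun w hw => by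
  rw [map_mul, ha w hw, hb w hw]

lemma gen_mul_mem_span_leftMulSet {W : Subgroup (L ≃ₐ[ℂ] L)} {U : Set (Module.End ℂ L)} {k : L}
    (hk : k ∈ fixedSet W) {X : Module.End ℂ L}
    (hX : X ∈ Submodule.span ℂ (leftMulSet (fixedSet W) U)) :
    gen k 1 * X ∈ Submodule.span ℂ (leftMulSet (fixedSet W) U) := by
  suffices h : Submodule.span ℂ (leftMulSet (fixedSet W) U) ≤
      (Submodule.span ℂ (leftMulSet (fixedSet W) U)).comap (LinearMap.mulLeft ℂ (gen k 1)) from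
    h hX
  refine Submodule.span_le.mpr ?_
  rintro _ ⟨l, hl, Y, hY, rfl⟩
  refine Submodule.subset_span ⟨k * l, mul_mem_fixedSet hk hl, Y, hY, ?_⟩
  simp only [LinearMap.mulLeft_apply, mulLeft_comp_eq_gen_mul, ← mul_assoc, gen_mul_gen]
  simp

lemma mul_gen_mem_span_rightMulSet {W : Subgroup (L ≃ₐ[ℂ] L)} {U : Set (Module.End ℂ L)} {k : L}
    (hk : k ∈ fixedSet W) {X : Module.End ℂ L}
    (hX : X ∈ Submodule.span ℂ (rightMulSet (fixedSet W) U)) :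
    X * gen k 1 ∈ Submodule.span ℂ (rightMulSet (fixedSet W) U) := by
  suffices h : Submodule.span ℂ (rightMulSet (fixedSet W) U) ≤
      (Submodule.span ℂ (rightMulSet (fixedSet W) U)).comap (LinearMap.mulRight ℂ (gen k 1)) from
    h hX
  refine Submodule.span_le.mpr ?_
  rintro _ ⟨l, hl, Y, hY, rfl⟩
  refine Submodule.subset_span ⟨l * k, mul_mem_fixedSet hl hk, Y, hY, ?_⟩
  simp only [LinearMap.mulRight_apply, comp_mulLeft_eq_mul_gen, mul_assoc, gen_mul_gen]
  simp

lemma span_leftMulSet_le_conjInvSubmodule {M : Submonoid (L ≃ₐ[ℂ] L)}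
    {W : Subgroup (L ≃ₐ[ℂ] L)} {U : Set (Module.End ℂ L)} (hU : U ⊆ conjInv M W) :
    Submodule.span ℂ (leftMulSet (fixedSet W) U) ≤ conjInvSubmodule M W := by
  refine Submodule.span_le.mpr ?_
  rintro _ ⟨k, hk, X, hX, rfl⟩
  exact conjInv_mul_mem (gen_mem_conjInv hk) (hU hX)

lemma span_rightMulSet_le_conjInvSubmodule {M : Submonoid (L ≃ₐ[ℂ] L)}
    {W : Subgroup (L ≃ₐ[ℂ] L)} {U : Set (Module.End ℂ L)} (hU : U ⊆ conjInv M W) :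
    Submodule.span ℂ (rightMulSet (fixedSet W) U) ≤ conjInvSubmodule M W := by
  refine Submodule.span_le.mpr ?_
  rintro _ ⟨k, hk, X, hX, rfl⟩
  exact conjInv_mul_mem (hU hX) (gen_mem_conjInv hk)

end SkewMonoidRing

section Restriction

variable {A C : Type*} [Ring A] [Algebra ℂ A] [Ring C]

/-- A linear map on a subalgebra sends the span of `T` into `S` as soon as it sends `T` into `S`. -/
lemma map_mem_of_mem_span [Algebra ℂ C] {B : Subalgebra ℂ A} (φ : B →ₗ[ℂ] C) (S : Submodule ℂ C)
    {T : Set A} (hT : T ⊆ B) (h : ∀ x (hx : x ∈ T), φ ⟨x, hT hx⟩ ∈ S) {x : A}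
    (hx : x ∈ Submodule.span ℂ T) (hxB : x ∈ B) : φ ⟨x, hxB⟩ ∈ S := by
  have key : Submodule.span ℂ T ≤ (S.comap φ).map B.toSubmodule.subtype :=
    Submodule.span_le.mpr fun y hy => ⟨⟨y, hT hy⟩, h y hy, rfl⟩
  obtain ⟨y, hy, rfl⟩ := key hx
  exact hy

/-- A ring homomorphism on a subalgebra sends the subring generated by `T` into `R` as soon as it
sends `T` into `R`. -/
lemma map_mem_of_mem_closure {B : Subalgebra ℂ A} (φ : B →+* C) (R : Subring C) {T : Set A}
    (hT : T ⊆ B) (h : ∀ x (hx : x ∈ T), φ ⟨x, hT hx⟩ ∈ R) {x : A}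
    (hx : x ∈ Subring.closure T) (hxB : x ∈ B) : φ ⟨x, hxB⟩ ∈ R := by
  have key : Subring.closure T ≤ (R.comap φ).map B.subtype :=
    Subring.closure_le.mpr fun y hy => ⟨⟨y, hT hy⟩, h y hy, rfl⟩
  obtain ⟨y, hy, rfl⟩ := key hx
  exact hy

end Restriction

section Product

variable {L₁ L₂ L : Type*} [Field L₁] [Algebra ℂ L₁] [Field L₂] [Algebra ℂ L₂]
  [Field L] [Algebra ℂ L] {ι₁ : L₁ →ₐ[ℂ] L} {ι₂ : L₂ →ₐ[ℂ] L}

lemma mul_mem_tensorSub {A₁ : Subalgebra ℂ L₁} {A₂ : Subalgebra ℂ L₂} {a : L₁} {b : L₂}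
    (ha : a ∈ A₁) (hb : b ∈ A₂) : ι₁ a * ι₂ b ∈ tensorSub A₁ A₂ ι₁ ι₂ :=
  mul_mem (Algebra.subset_adjoin (Or.inl ⟨a, ha, rfl⟩))
    (Algebra.subset_adjoin (Or.inr ⟨b, hb, rfl⟩))

lemma tensorSub_mono {A₁ B₁ : Subalgebra ℂ L₁} {A₂ B₂ : Subalgebra ℂ L₂} (h₁ : A₁ ≤ B₁)
    (h₂ : A₂ ≤ B₂) : tensorSub A₁ A₂ ι₁ ι₂ ≤ tensorSub B₁ B₂ ι₁ ι₂ :=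
  Algebra.adjoin_mono (Set.union_subset_union (Set.image_mono h₁) (Set.image_mono h₂))

/-- The subalgebra generated by `ι₁(A₁) ∪ ι₂(A₂)` is spanned by the products `ι₁(a) ι₂(b)`. -/
lemma tensorSub_toSubmodule_le_span (A₁ : Subalgebra ℂ L₁) (A₂ : Subalgebra ℂ L₂) :
    Subalgebra.toSubmodule (tensorSub A₁ A₂ ι₁ ι₂) ≤
      Submodule.span ℂ {x | ∃ a ∈ A₁, ∃ b ∈ A₂, x = ι₁ a * ι₂ b} := by
  set T : Set L := {x | ∃ a ∈ A₁, ∃ b ∈ A₂, x = ι₁ a * ι₂ b}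
  have hmul : Submodule.span ℂ T * Submodule.span ℂ T ≤ Submodule.span ℂ T := by
    rw [Submodule.span_mul_span]
    refine Submodule.span_mono ?_
    rintro _ ⟨_, ⟨a, ha, b, hb, rfl⟩, _, ⟨c, hc, d, hd, rfl⟩, rfl⟩
    exact ⟨a * c, mul_mem ha hc, b * d, mul_mem hb hd, by simp only [map_mul]; ring⟩
  intro x hx
  induction hx using Algebra.adjoin_induction with
  | mem x hx =>
    obtain ⟨a, ha, rfl⟩ | ⟨b, hb, rfl⟩ := hx
    · exact Submodule.subset_span ⟨a, ha, 1, one_mem _, by simp⟩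
    · exact Submodule.subset_span ⟨1, one_mem _, b, hb, by simp⟩
  | algebraMap c =>
    exact Submodule.subset_span ⟨algebraMap ℂ L₁ c, A₁.algebraMap_mem c, 1, one_mem _, by simp⟩
  | add x y _ _ hx hy => exact add_mem hx hy
  | mul x y _ _ hx hy => exact hmul (Submodule.mul_mem_mul hx hy)

lemma tensorSub_induction {A₁ : Subalgebra ℂ L₁} {A₂ : Subalgebra ℂ L₂} {p : L → Prop}
    (mul : ∀ a ∈ A₁, ∀ b ∈ A₂, p (ι₁ a * ι₂ b)) (add : ∀ x y, p x → p y → p (x + y)) {x : L}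
    (hx : x ∈ tensorSub A₁ A₂ ι₁ ι₂) : p x := by
  replace hx := tensorSub_toSubmodule_le_span A₁ A₂ hx
  induction hx using Submodule.closure_induction with
  | zero => simpa using mul 0 (zero_mem _) 0 (zero_mem _)
  | add x y _ _ hx hy => exact add x y hx hy
  | smul_mem c x hx =>
    obtain ⟨a, ha, b, hb, rfl⟩ := hx
    simpa using mul (c • a) (A₁.smul_mem ha c) b hb

variable {ext : ((L₁ ≃ₐ[ℂ] L₁) × (L₂ ≃ₐ[ℂ] L₂)) →* (L ≃ₐ[ℂ] L)}

/-- `ext p` extends `p.1 ⊗ p.2` to `L`. -/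
def IsProductExtension (ι₁ : L₁ →ₐ[ℂ] L) (ι₂ : L₂ →ₐ[ℂ] L)
    (ext : ((L₁ ≃ₐ[ℂ] L₁) × (L₂ ≃ₐ[ℂ] L₂)) →* (L ≃ₐ[ℂ] L)) : Prop :=
  ∀ (p : (L₁ ≃ₐ[ℂ] L₁) × (L₂ ≃ₐ[ℂ] L₂)) (f : L₁) (g : L₂),
    ext p (ι₁ f * ι₂ g) = ι₁ (p.1 f) * ι₂ (p.2 g)

lemma IsProductExtension.map_mem_tensorSub (hext : IsProductExtension ι₁ ι₂ ext)
    (p : (L₁ ≃ₐ[ℂ] L₁) × (L₂ ≃ₐ[ℂ] L₂)) {x : L} (hx : x ∈ tensorSub ⊤ ⊤ ι₁ ι₂) :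
    ext p x ∈ tensorSub ⊤ ⊤ ι₁ ι₂ := by
  refine tensorSub_induction (p := fun x => ext p x ∈ tensorSub ⊤ ⊤ ι₁ ι₂)
    (fun a _ b _ => ?_) (fun x y hx hy => ?_) hx
  · rw [hext]
    exact mul_mem_tensorSub trivial trivial
  · rw [map_add]
    exact add_mem hx hy

lemma IsProductExtension.mul_mem_fixedSet (hext : IsProductExtension ι₁ ι₂ ext)
    {W₁ : Subgroup (L₁ ≃ₐ[ℂ] L₁)} {W₂ : Subgroup (L₂ ≃ₐ[ℂ] L₂)} {k₁ : L₁} {k₂ : L₂}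
    (h₁ : k₁ ∈ fixedSet W₁) (h₂ : k₂ ∈ fixedSet W₂) :
    ι₁ k₁ * ι₂ k₂ ∈ fixedSet (Subgroup.map ext (W₁.prod W₂)) := by
  rintro _ ⟨p, hp, rfl⟩
  rw [hext, h₁ p.1 hp.1, h₂ p.2 hp.2]

/-- The action of `W₁ × W₂` on `L`. -/
def prodAction (ext : ((L₁ ≃ₐ[ℂ] L₁) × (L₂ ≃ₐ[ℂ] L₂)) →* (L ≃ₐ[ℂ] L))
    (W₁ : Subgroup (L₁ ≃ₐ[ℂ] L₁)) (W₂ : Subgroup (L₂ ≃ₐ[ℂ] L₂)) : W₁ × W₂ →* (L ≃ₐ[ℂ] L) :=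
  ext.comp (W₁.subtype.prodMap W₂.subtype)

lemma prodAction_mem {W₁ : Subgroup (L₁ ≃ₐ[ℂ] L₁)} {W₂ : Subgroup (L₂ ≃ₐ[ℂ] L₂)} (g : W₁ × W₂) :
    prodAction ext W₁ W₂ g ∈ Subgroup.map ext (W₁.prod W₂) :=
  ⟨(g.1, g.2), ⟨g.1.2, g.2.2⟩, rfl⟩

/-- `L` is spanned by `Λ₁ ⊗ Λ₂` over the fixed field: denominators may be taken invariant. -/
lemma IsProductExtension.exists_eq_fixed_mul (hext : IsProductExtension ι₁ ι₂ ext)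
    {Λ₁ : Subalgebra ℂ L₁} {Λ₂ : Subalgebra ℂ L₂}
    (hfrac : ∀ x : L, ∃ a ∈ tensorSub Λ₁ Λ₂ ι₁ ι₂, ∃ b ∈ tensorSub Λ₁ Λ₂ ι₁ ι₂,
      b ≠ 0 ∧ x = a / b)
    (W₁ : Subgroup (L₁ ≃ₐ[ℂ] L₁)) (W₂ : Subgroup (L₂ ≃ₐ[ℂ] L₂)) [Fintype W₁] [Fintype W₂]
    (x : L) : ∃ k ∈ fixedSet (Subgroup.map ext (W₁.prod W₂)),
      ∃ t ∈ tensorSub ⊤ ⊤ ι₁ ι₂, x = k * t := by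
  classical
  obtain ⟨a, ha, b, hb, hb0, rfl⟩ := hfrac x
  set ρ := prodAction ext W₁ W₂
  have hle : tensorSub Λ₁ Λ₂ ι₁ ι₂ ≤ tensorSub ⊤ ⊤ ι₁ ι₂ := tensorSub_mono le_top le_top
  have hprod : (∏ g, ρ g b) = b * ∏ g ∈ Finset.univ.erase 1, ρ g b := by
    rw [← Finset.mul_prod_erase _ _ (Finset.mem_univ 1), map_one, AlgEquiv.one_apply]
  have hN : (∏ g, ρ g b) ≠ 0 := Finset.prod_ne_zero_iff.mpr fun g _ => by simpa using hb0
  refine ⟨(∏ g, ρ g b)⁻¹, ?_, a * ∏ g ∈ Finset.univ.erase 1, ρ g b,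
    mul_mem (hle ha) (prod_mem fun g _ => hext.map_mem_tensorSub _ (hle hb)), ?_⟩
  · rintro _ ⟨p, hp, rfl⟩
    let g₀ : W₁ × W₂ := (⟨p.1, hp.1⟩, ⟨p.2, hp.2⟩)
    change ρ g₀ _ = _
    rw [map_inv₀, map_prod]
    congr 1
    refine Fintype.prod_equiv (Equiv.mulLeft g₀) _ _ fun g => ?_
    rw [Equiv.coe_mulLeft, map_mul, AlgEquiv.mul_apply]
  · rw [hprod] at hN ⊢
    have := right_ne_zero_of_mul hN
    field_simp

variable {N₁ : Submonoid (L₁ ≃ₐ[ℂ] L₁)} {N₂ : Submonoid (L₂ ≃ₐ[ℂ] L₂)}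
  {ψ : (skew N₁ ⊗[ℂ] skew N₂) →ₐ[ℂ] Module.End ℂ L}

/-- `ψ` is given on generators by `m_a w₁ ⊗ m_b w₂ ↦ m_{a ⊗ b} (w₁ ⊗ w₂)`. -/
def IsProductEmbedding (ι₁ : L₁ →ₐ[ℂ] L) (ι₂ : L₂ →ₐ[ℂ] L)
    (ext : ((L₁ ≃ₐ[ℂ] L₁) × (L₂ ≃ₐ[ℂ] L₂)) →* (L ≃ₐ[ℂ] L))
    (ψ : (skew N₁ ⊗[ℂ] skew N₂) →ₐ[ℂ] Module.End ℂ L) : Prop :=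
  ∀ (a : L₁) (b : L₂) (w₁ : L₁ ≃ₐ[ℂ] L₁) (w₂ : L₂ ≃ₐ[ℂ] L₂) (h₁ : w₁ ∈ N₁) (h₂ : w₂ ∈ N₂),
    ψ (⟨gen a w₁, gen_mem_skew a h₁⟩ ⊗ₜ[ℂ] ⟨gen b w₂, gen_mem_skew b h₂⟩)
      = gen (ι₁ a * ι₂ b) (ext (w₁, w₂))

lemma IsProductEmbedding.apply_mul (hψ : IsProductEmbedding ι₁ ι₂ ext ψ)
    (hext : IsProductExtension ι₁ ι₂ ext) (X₁ : skew N₁) (X₂ : skew N₂) (f : L₁) (g : L₂) :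
    ψ (X₁ ⊗ₜ[ℂ] X₂) (ι₁ f * ι₂ g) =
      ι₁ ((X₁ : Module.End ℂ L₁) f) * ι₂ ((X₂ : Module.End ℂ L₂) g) := by
  induction X₁ using skew_induction with
  | gen a w₁ h₁ =>
    induction X₂ using skew_induction with
    | gen b w₂ h₂ =>
      rw [hψ _ _ _ _ h₁ h₂, gen_apply, hext, gen_apply, gen_apply, map_mul, map_mul]
      ring
    | add X Y hX hY =>
      simp only [TensorProduct.tmul_add, map_add, LinearMap.add_apply, hX, hY,
        Subalgebra.coe_add, mul_add]
  | add X Y hX hY =>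
    simp only [TensorProduct.add_tmul, map_add, LinearMap.add_apply, hX, hY,
      Subalgebra.coe_add, add_mul]

lemma IsProductEmbedding.mem_skew (hψ : IsProductEmbedding ι₁ ι₂ ext ψ)
    {M₁ : Submonoid (L₁ ≃ₐ[ℂ] L₁)} {M₂ : Submonoid (L₂ ≃ₐ[ℂ] L₂)} (h₁ : M₁ ≤ N₁) (h₂ : M₂ ≤ N₂)
    (X₁ : skew M₁) (X₂ : skew M₂) :
    ψ (⟨X₁, skew_mono h₁ X₁.2⟩ ⊗ₜ[ℂ] ⟨X₂, skew_mono h₂ X₂.2⟩) ∈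
      skew (Submonoid.map ext (M₁.prod M₂)) := by
  change ψ (Subalgebra.inclusion (skew_mono h₁) X₁ ⊗ₜ[ℂ]
    Subalgebra.inclusion (skew_mono h₂) X₂) ∈ _
  induction X₁ using skew_induction with
  | gen a w₁ hw₁ =>
    induction X₂ using skew_induction with
    | gen b w₂ hw₂ =>
      rw [Subalgebra.inclusion_mk, Subalgebra.inclusion_mk, hψ _ _ _ _ (h₁ hw₁) (h₂ hw₂)]
      exact gen_mem_skew _ ⟨(w₁, w₂), ⟨hw₁, hw₂⟩, rfl⟩
    | add X Y hX hY =>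
      rw [map_add, TensorProduct.tmul_add, map_add]
      exact add_mem hX hY
  | add X Y hX hY =>
    rw [map_add, TensorProduct.add_tmul, map_add]
    exact add_mem hX hY

lemma conjBy_mem_skew_of_mem {w : L₁ ≃ₐ[ℂ] L₁} (hw : w ∈ N₁) (hw' : w⁻¹ ∈ N₁)
    (X : skew N₁) : conjBy w (X : Module.End ℂ L₁) ∈ skew N₁ :=
  mul_mem (mul_mem (gen_mem_skew 1 hw) X.2) (gen_mem_skew 1 hw')

lemma IsProductEmbedding.conjBy_apply (hψ : IsProductEmbedding ι₁ ι₂ ext ψ)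
    {w₁ : L₁ ≃ₐ[ℂ] L₁} {w₂ : L₂ ≃ₐ[ℂ] L₂} (h₁ : w₁ ∈ N₁) (h₁' : w₁⁻¹ ∈ N₁)
    (h₂ : w₂ ∈ N₂) (h₂' : w₂⁻¹ ∈ N₂) (X₁ : skew N₁) (X₂ : skew N₂) :
    conjBy (ext (w₁, w₂)) (ψ (X₁ ⊗ₜ[ℂ] X₂)) =
      ψ (⟨conjBy w₁ X₁, conjBy_mem_skew_of_mem h₁ h₁' X₁⟩ ⊗ₜ[ℂ]
        ⟨conjBy w₂ X₂, conjBy_mem_skew_of_mem h₂ h₂' X₂⟩) := by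
  have e := hψ 1 1 w₁ w₂ h₁ h₂
  have e' := hψ 1 1 w₁⁻¹ w₂⁻¹ h₁' h₂'
  simp only [map_one, mul_one] at e e'
  have hinv : (ext (w₁, w₂))⁻¹ = ext (w₁⁻¹, w₂⁻¹) := by rw [← map_inv, Prod.inv_mk]
  rw [_root_.conjBy_apply, hinv, ← e, ← e', ← map_mul, ← map_mul,
    Algebra.TensorProduct.tmul_mul_tmul, Algebra.TensorProduct.tmul_mul_tmul]
  rfl

lemma IsProductEmbedding.gen_eq (hψ : IsProductEmbedding ι₁ ι₂ ext ψ) (a : L₁) (b : L₂) :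
    gen (ι₁ a * ι₂ b) 1 = ψ (⟨gen a 1, gen_mem_skew a (one_mem N₁)⟩ ⊗ₜ[ℂ]
      ⟨gen b 1, gen_mem_skew b (one_mem N₂)⟩) := by
  rw [hψ _ _ _ _ (one_mem N₁) (one_mem N₂), ← Prod.one_eq_mk, map_one]

variable {M₁ : Submonoid (L₁ ≃ₐ[ℂ] L₁)} {M₂ : Submonoid (L₂ ≃ₐ[ℂ] L₂)}
  {W₁ : Subgroup (L₁ ≃ₐ[ℂ] L₁)} {W₂ : Subgroup (L₂ ≃ₐ[ℂ] L₂)}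
  {U₁ : Set (Module.End ℂ L₁)} {U₂ : Set (Module.End ℂ L₂)}

lemma IsProductEmbedding.mem_conjInv (hψ : IsProductEmbedding ι₁ ι₂ ext ψ)
    (hM₁ : M₁ ≤ N₁) (hM₂ : M₂ ≤ N₂) (hW₁ : W₁.toSubmonoid ≤ N₁) (hW₂ : W₂.toSubmonoid ≤ N₂)
    {X₁ : skew N₁} {X₂ : skew N₂} (h₁ : (X₁ : Module.End ℂ L₁) ∈ conjInv M₁ W₁)
    (h₂ : (X₂ : Module.End ℂ L₂) ∈ conjInv M₂ W₂) :
    ψ (X₁ ⊗ₜ[ℂ] X₂) ∈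
      conjInv (Submonoid.map ext (M₁.prod M₂)) (Subgroup.map ext (W₁.prod W₂)) := by
  refine ⟨hψ.mem_skew hM₁ hM₂ ⟨X₁, h₁.1⟩ ⟨X₂, h₂.1⟩, ?_⟩
  rintro _ ⟨⟨w₁, w₂⟩, ⟨hw₁, hw₂⟩, rfl⟩
  change conjBy (ext (w₁, w₂)) _ = _
  rw [hψ.conjBy_apply (hW₁ hw₁) (hW₁ (W₁.inv_mem hw₁)) (hW₂ hw₂) (hW₂ (W₂.inv_mem hw₂))]
  congr 2
  · exact Subtype.ext (h₁.2 w₁ hw₁)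
  · exact Subtype.ext (h₂.2 w₂ hw₂)

lemma IsProductEmbedding.map_pureSpan_subset_conjInv (hψ : IsProductEmbedding ι₁ ι₂ ext ψ)
    (hM₁ : M₁ ≤ N₁) (hM₂ : M₂ ≤ N₂) (hW₁ : W₁.toSubmonoid ≤ N₁) (hW₂ : W₂.toSubmonoid ≤ N₂)
    (hU₁ : U₁ ⊆ conjInv M₁ W₁) (hU₂ : U₂ ⊆ conjInv M₂ W₂) :
    (Submodule.map ψ.toLinearMap (pureSpan N₁ N₂ U₁ U₂) : Set (Module.End ℂ L)) ⊆
      conjInv (Submonoid.map ext (M₁.prod M₂)) (Subgroup.map ext (W₁.prod W₂)) := by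
  suffices h : Submodule.map ψ.toLinearMap (pureSpan N₁ N₂ U₁ U₂) ≤
      conjInvSubmodule (Submonoid.map ext (M₁.prod M₂)) (Subgroup.map ext (W₁.prod W₂)) from h
  rw [Submodule.map_le_iff_le_comap, pureSpan, Submodule.span_le]
  rintro _ ⟨X₁, X₂, h₁, h₂, rfl⟩
  exact hψ.mem_conjInv hM₁ hM₂ hW₁ hW₂ (hU₁ h₁) (hU₂ h₂)

lemma map_pureSpan_mem (ψ : (skew N₁ ⊗[ℂ] skew N₂) →ₐ[ℂ] Module.End ℂ L)
    {X₁ : skew N₁} {X₂ : skew N₂} (h₁ : (X₁ : Module.End ℂ L₁) ∈ U₁)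
    (h₂ : (X₂ : Module.End ℂ L₂) ∈ U₂) :
    ψ (X₁ ⊗ₜ[ℂ] X₂) ∈ Submodule.map ψ.toLinearMap (pureSpan N₁ N₂ U₁ U₂) :=
  ⟨_, Submodule.subset_span ⟨X₁, X₂, h₁, h₂, rfl⟩, rfl⟩

lemma IsProductEmbedding.gammaMulSet_subset (hψ : IsProductEmbedding ι₁ ι₂ ext ψ)
    {Γ₁ : Subalgebra ℂ L₁} {Γ₂ : Subalgebra ℂ L₂}
    (h₁ : gammaMulSet Γ₁ ⊆ U₁) (h₂ : gammaMulSet Γ₂ ⊆ U₂) :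
    gammaMulSet (tensorSub Γ₁ Γ₂ ι₁ ι₂) ⊆
      ↑(Submodule.map ψ.toLinearMap (pureSpan N₁ N₂ U₁ U₂)) := by
  rintro _ ⟨γ, hγ, rfl⟩
  refine tensorSub_induction (p := fun γ => gen γ 1 ∈
    Submodule.map ψ.toLinearMap (pureSpan N₁ N₂ U₁ U₂)) (fun a ha b hb => ?_)
    (fun x y hx hy => ?_) hγ
  · rw [hψ.gen_eq]
    exact map_pureSpan_mem ψ (h₁ ⟨a, ha, rfl⟩) (h₂ ⟨b, hb, rfl⟩)
  · rw [gen_add]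
    exact add_mem hx hy

lemma pureSpan_mul_mem {R₁ : Subring (Module.End ℂ L₁)} {R₂ : Subring (Module.End ℂ L₂)}
    {s t : skew N₁ ⊗[ℂ] skew N₂} (hs : s ∈ pureSpan N₁ N₂ R₁ R₂)
    (ht : t ∈ pureSpan N₁ N₂ R₁ R₂) : s * t ∈ pureSpan N₁ N₂ R₁ R₂ := by
  have h : pureSpan N₁ N₂ (R₁ : Set (Module.End ℂ L₁)) R₂ * pureSpan N₁ N₂ R₁ R₂ ≤
      pureSpan N₁ N₂ R₁ R₂ := by
    rw [pureSpan, Submodule.span_mul_span]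
    refine Submodule.span_mono ?_
    rintro _ ⟨_, ⟨X₁, X₂, h₁, h₂, rfl⟩, _, ⟨Y₁, Y₂, k₁, k₂, rfl⟩, rfl⟩
    exact ⟨X₁ * Y₁, X₂ * Y₂, mul_mem h₁ k₁, mul_mem h₂ k₂,
      Algebra.TensorProduct.tmul_mul_tmul _ _ _ _⟩
  exact h (Submodule.mul_mem_mul hs ht)

/-- If `Rᵢ` is generated by `Γᵢ` and a finite set, then so is `ψ(R₁ ⊗ R₂)` by `Γ₁ ⊗ Γ₂`. -/
lemma IsProductEmbedding.exists_finset_closure_eq (hψ : IsProductEmbedding ι₁ ι₂ ext ψ)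
    (Γ₁ : Subalgebra ℂ L₁) (Γ₂ : Subalgebra ℂ L₂)
    (s₁ : Finset (Module.End ℂ L₁)) (s₂ : Finset (Module.End ℂ L₂))
    (h₁ : (Subring.closure (gammaMulSet Γ₁ ∪ s₁) : Set (Module.End ℂ L₁)) ⊆ skew N₁)
    (h₂ : (Subring.closure (gammaMulSet Γ₂ ∪ s₂) : Set (Module.End ℂ L₂)) ⊆ skew N₂) :
    ∃ s : Finset (Module.End ℂ L),
      ↑s ⊆ (Submodule.map ψ.toLinearMap
        (pureSpan N₁ N₂ (Subring.closure (gammaMulSet Γ₁ ∪ s₁))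
          (Subring.closure (gammaMulSet Γ₂ ∪ s₂))) : Set (Module.End ℂ L)) ∧
      (Submodule.map ψ.toLinearMap (pureSpan N₁ N₂ (Subring.closure (gammaMulSet Γ₁ ∪ s₁))
          (Subring.closure (gammaMulSet Γ₂ ∪ s₂))) : Set (Module.End ℂ L)) =
        ↑(Subring.closure (gammaMulSet (tensorSub Γ₁ Γ₂ ι₁ ι₂) ∪ ↑s)) := by
  classical
  set R₁ := Subring.closure (gammaMulSet Γ₁ ∪ (s₁ : Set (Module.End ℂ L₁)))
  set R₂ := Subring.closure (gammaMulSet Γ₂ ∪ (s₂ : Set (Module.End ℂ L₂)))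
  set φ₁ : skew N₁ →ₐ[ℂ] Module.End ℂ L := ψ.comp Algebra.TensorProduct.includeLeft with hφ₁
  set φ₂ : skew N₂ →ₐ[ℂ] Module.End ℂ L := ψ.comp Algebra.TensorProduct.includeRight with hφ₂
  set s : Finset (Module.End ℂ L) :=
    (s₁.subtype (· ∈ skew N₁)).image φ₁ ∪ (s₂.subtype (· ∈ skew N₂)).image φ₂ with hs
  have hsub₁ : gammaMulSet Γ₁ ∪ (s₁ : Set (Module.End ℂ L₁)) ⊆ R₁ := Subring.subset_closure
  have hsub₂ : gammaMulSet Γ₂ ∪ (s₂ : Set (Module.End ℂ L₂)) ⊆ R₂ := Subring.subset_closure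
  have hsmem : (s : Set (Module.End ℂ L)) ⊆
      Submodule.map ψ.toLinearMap (pureSpan N₁ N₂ R₁ R₂) := by
    intro Z hZ
    simp only [hs, Finset.coe_union, Finset.coe_image, Set.mem_union, Set.mem_image,
      Finset.mem_coe, Finset.mem_subtype] at hZ
    obtain ⟨X, hX, rfl⟩ | ⟨X, hX, rfl⟩ := hZ
    · exact map_pureSpan_mem ψ (hsub₁ (Or.inr hX)) (one_mem R₂)
    · exact map_pureSpan_mem ψ (one_mem R₁) (hsub₂ (Or.inr hX))
  refine ⟨s, hsmem, Set.Subset.antisymm ?_ ?_⟩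
  · set R := Subring.closure (gammaMulSet (tensorSub Γ₁ Γ₂ ι₁ ι₂) ∪ (s : Set (Module.End ℂ L)))
    have hR : gammaMulSet (tensorSub Γ₁ Γ₂ ι₁ ι₂) ∪ (s : Set (Module.End ℂ L)) ⊆ R :=
      Subring.subset_closure
    have hφ₁gen : ∀ a, φ₁ ⟨gen a 1, gen_mem_skew a (one_mem N₁)⟩ = gen (ι₁ a * ι₂ 1) 1 := by
      intro a
      rw [hψ.gen_eq]
      simp only [gen_one_one]
      rfl
    have hφ₂gen : ∀ b, φ₂ ⟨gen b 1, gen_mem_skew b (one_mem N₂)⟩ = gen (ι₁ 1 * ι₂ b) 1 := by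
      intro b
      rw [hψ.gen_eq]
      simp only [gen_one_one]
      rfl
    have hmem₁ : ∀ X : skew N₁, (X : Module.End ℂ L₁) ∈ R₁ → φ₁ X ∈ R := fun X hX => by
      refine map_mem_of_mem_closure (φ₁ : skew N₁ →+* Module.End ℂ L) R (hsub₁.trans h₁) ?_ hX X.2
      rintro x (⟨γ, hγ, rfl⟩ | hx)
      · exact hR (Or.inl ⟨_, mul_mem_tensorSub hγ (one_mem Γ₂), hφ₁gen γ⟩)
      · refine hR (Or.inr ?_)
        simp only [hs, Finset.coe_union, Finset.coe_image]
        exact Or.inl ⟨_, by simpa using hx, rfl⟩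
    have hmem₂ : ∀ X : skew N₂, (X : Module.End ℂ L₂) ∈ R₂ → φ₂ X ∈ R := fun X hX => by
      refine map_mem_of_mem_closure (φ₂ : skew N₂ →+* Module.End ℂ L) R (hsub₂.trans h₂) ?_ hX X.2
      rintro x (⟨γ, hγ, rfl⟩ | hx)
      · exact hR (Or.inl ⟨_, mul_mem_tensorSub (one_mem Γ₁) hγ, hφ₂gen γ⟩)
      · refine hR (Or.inr ?_)
        simp only [hs, Finset.coe_union, Finset.coe_image]
        exact Or.inr ⟨_, by simpa using hx, rfl⟩
    rintro _ ⟨t, ht, rfl⟩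
    induction ht using Submodule.span_induction with
    | mem t ht =>
      obtain ⟨X₁, X₂, hX₁, hX₂, rfl⟩ := ht
      have h : ψ (X₁ ⊗ₜ[ℂ] X₂) = φ₁ X₁ * φ₂ X₂ := by
        rw [hφ₁, hφ₂, AlgHom.comp_apply, AlgHom.comp_apply, ← map_mul]
        simp
      change ψ (X₁ ⊗ₜ[ℂ] X₂) ∈ R
      rw [h]
      exact mul_mem (hmem₁ X₁ hX₁) (hmem₂ X₂ hX₂)
    | zero =>
      rw [map_zero]
      exact zero_mem R
    | add x y _ _ hx hy =>
      rw [map_add]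
      exact add_mem hx hy
    | smul c x _ hx =>
      have hc : c • ψ.toLinearMap x = gen (c • 1) 1 * ψ.toLinearMap x := by
        rw [gen_smul, gen_one_one, smul_mul_assoc, one_mul]
      rw [map_smul, hc]
      exact mul_mem (hR (Or.inl ⟨_, Subalgebra.smul_mem _ (one_mem _) c, rfl⟩)) hx
  · intro Z hZ
    induction hZ using Subring.closure_induction with
    | mem Z hZ =>
      obtain hZ | hZ := hZ
      · exact hψ.gammaMulSet_subset (Set.subset_union_left.trans hsub₁)
          (Set.subset_union_left.trans hsub₂) hZ
      · exact hsmem hZ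
    | zero => exact zero_mem _
    | one =>
      have h := map_pureSpan_mem ψ (X₁ := 1) (X₂ := 1) (one_mem R₁) (one_mem R₂)
      rwa [← Algebra.TensorProduct.one_def, map_one] at h
    | add X Y _ _ hX hY => exact add_mem hX hY
    | neg X _ hX => exact neg_mem hX
    | mul X Y _ _ hX hY =>
      obtain ⟨s, hs, rfl⟩ := hX
      obtain ⟨t, ht, rfl⟩ := hY
      exact ⟨s * t, pureSpan_mul_mem hs ht, map_mul ψ s t⟩

/-- Membership of `ψ(X₁ ⊗ X₂)` in a submodule may be checked on spanning sets of both factors. -/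
lemma tmul_mem_of_mem_span {T₁ : Set (Module.End ℂ L₁)} {T₂ : Set (Module.End ℂ L₂)}
    (hT₁ : T₁ ⊆ skew N₁) (hT₂ : T₂ ⊆ skew N₂) (S : Submodule ℂ (Module.End ℂ L))
    (h : ∀ (X₁ : skew N₁) (X₂ : skew N₂), (X₁ : Module.End ℂ L₁) ∈ T₁ →
      (X₂ : Module.End ℂ L₂) ∈ T₂ → ψ (X₁ ⊗ₜ[ℂ] X₂) ∈ S)
    {X₁ : skew N₁} {X₂ : skew N₂} (h₁ : (X₁ : Module.End ℂ L₁) ∈ Submodule.span ℂ T₁)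
    (h₂ : (X₂ : Module.End ℂ L₂) ∈ Submodule.span ℂ T₂) : ψ (X₁ ⊗ₜ[ℂ] X₂) ∈ S :=
  map_mem_of_mem_span (ψ.toLinearMap ∘ₗ (TensorProduct.mk ℂ (skew N₁) (skew N₂)).flip X₂) S hT₁
    (fun x hx => map_mem_of_mem_span (ψ.toLinearMap ∘ₗ TensorProduct.mk ℂ _ _ ⟨x, hT₁ hx⟩) S hT₂
      (fun y hy => h ⟨x, hT₁ hx⟩ ⟨y, hT₂ hy⟩ hx hy) h₂ X₂.2) h₁ X₁.2

lemma IsProductEmbedding.tmul_mem_span_leftMulSet (hψ : IsProductEmbedding ι₁ ι₂ ext ψ)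
    (hext : IsProductExtension ι₁ ι₂ ext) (hU₁ : U₁ ⊆ skew N₁) (hU₂ : U₂ ⊆ skew N₂)
    {X₁ : skew N₁} {X₂ : skew N₂}
    (h₁ : (X₁ : Module.End ℂ L₁) ∈ Submodule.span ℂ (leftMulSet (fixedSet W₁) U₁))
    (h₂ : (X₂ : Module.End ℂ L₂) ∈ Submodule.span ℂ (leftMulSet (fixedSet W₂) U₂)) :
    ψ (X₁ ⊗ₜ[ℂ] X₂) ∈ Submodule.span ℂ (leftMulSet (fixedSet (Subgroup.map ext (W₁.prod W₂)))
      ↑(Submodule.map ψ.toLinearMap (pureSpan N₁ N₂ U₁ U₂))) := by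
  refine tmul_mem_of_mem_span ?_ ?_ _ ?_ h₁ h₂
  · rintro _ ⟨k, -, X, hX, rfl⟩
    exact mul_mem (gen_mem_skew k (one_mem N₁)) (hU₁ hX)
  · rintro _ ⟨k, -, X, hX, rfl⟩
    exact mul_mem (gen_mem_skew k (one_mem N₂)) (hU₂ hX)
  · rintro ⟨_, _⟩ ⟨_, _⟩ ⟨k₁, hk₁, X₁, hX₁, rfl⟩ ⟨k₂, hk₂, X₂, hX₂, rfl⟩
    refine Submodule.subset_span ⟨ι₁ k₁ * ι₂ k₂, hext.mul_mem_fixedSet hk₁ hk₂,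
      ψ (⟨X₁, hU₁ hX₁⟩ ⊗ₜ[ℂ] ⟨X₂, hU₂ hX₂⟩), map_pureSpan_mem ψ hX₁ hX₂, ?_⟩
    rw [mulLeft_comp_eq_gen_mul (ι₁ k₁ * ι₂ k₂), hψ.gen_eq, ← map_mul,
      Algebra.TensorProduct.tmul_mul_tmul]
    rfl

lemma IsProductEmbedding.tmul_mem_span_rightMulSet (hψ : IsProductEmbedding ι₁ ι₂ ext ψ)
    (hext : IsProductExtension ι₁ ι₂ ext) (hU₁ : U₁ ⊆ skew N₁) (hU₂ : U₂ ⊆ skew N₂)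
    {X₁ : skew N₁} {X₂ : skew N₂}
    (h₁ : (X₁ : Module.End ℂ L₁) ∈ Submodule.span ℂ (rightMulSet (fixedSet W₁) U₁))
    (h₂ : (X₂ : Module.End ℂ L₂) ∈ Submodule.span ℂ (rightMulSet (fixedSet W₂) U₂)) :
    ψ (X₁ ⊗ₜ[ℂ] X₂) ∈ Submodule.span ℂ (rightMulSet (fixedSet (Subgroup.map ext (W₁.prod W₂)))
      ↑(Submodule.map ψ.toLinearMap (pureSpan N₁ N₂ U₁ U₂))) := by
  refine tmul_mem_of_mem_span ?_ ?_ _ ?_ h₁ h₂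
  · rintro _ ⟨k, -, X, hX, rfl⟩
    exact mul_mem (hU₁ hX) (gen_mem_skew k (one_mem N₁))
  · rintro _ ⟨k, -, X, hX, rfl⟩
    exact mul_mem (hU₂ hX) (gen_mem_skew k (one_mem N₂))
  · rintro ⟨_, _⟩ ⟨_, _⟩ ⟨k₁, hk₁, X₁, hX₁, rfl⟩ ⟨k₂, hk₂, X₂, hX₂, rfl⟩
    refine Submodule.subset_span ⟨ι₁ k₁ * ι₂ k₂, hext.mul_mem_fixedSet hk₁ hk₂,
      ψ (⟨X₁, hU₁ hX₁⟩ ⊗ₜ[ℂ] ⟨X₂, hU₂ hX₂⟩), map_pureSpan_mem ψ hX₁ hX₂, ?_⟩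
    rw [comp_mulLeft_eq_mul_gen (ι₁ k₁ * ι₂ k₂), hψ.gen_eq,
      ← map_mul, Algebra.TensorProduct.tmul_mul_tmul]
    rfl

lemma conjTrace_eq_sum [Fintype W₁] (hW₁ : W₁.toSubmonoid ≤ N₁) (X : skew N₁)
    (h : conjTrace W₁.subtype (X : Module.End ℂ L₁) ∈ skew N₁) :
    (⟨conjTrace W₁.subtype (X : Module.End ℂ L₁), h⟩ : skew N₁) =
      ∑ w : W₁, ⟨conjBy (w : L₁ ≃ₐ[ℂ] L₁) (X : Module.End ℂ L₁),
        conjBy_mem_skew_of_mem (hW₁ w.2) (hW₁ (W₁.inv_mem w.2)) X⟩ := by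
  refine Subtype.ext ?_
  rw [AddSubmonoidClass.coe_finsetSum]
  exact conjTrace_apply W₁.subtype X

/-- The trace over `W₁ × W₂` of `ψ(X₁ ⊗ X₂)` is the image of the tensor product of the traces. -/
lemma IsProductEmbedding.conjTrace_tmul (hψ : IsProductEmbedding ι₁ ι₂ ext ψ)
    [Fintype W₁] [Fintype W₂] (hW₁ : W₁.toSubmonoid ≤ N₁) (hW₂ : W₂.toSubmonoid ≤ N₂)
    (X₁ : skew N₁) (X₂ : skew N₂) (h₁ : conjTrace W₁.subtype (X₁ : Module.End ℂ L₁) ∈ skew N₁)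
    (h₂ : conjTrace W₂.subtype (X₂ : Module.End ℂ L₂) ∈ skew N₂) :
    conjTrace (prodAction ext W₁ W₂) (ψ (X₁ ⊗ₜ[ℂ] X₂)) =
      ψ (⟨conjTrace W₁.subtype (X₁ : Module.End ℂ L₁), h₁⟩ ⊗ₜ[ℂ]
        ⟨conjTrace W₂.subtype (X₂ : Module.End ℂ L₂), h₂⟩) := by
  rw [conjTrace_eq_sum hW₁ X₁ h₁, conjTrace_eq_sum hW₂ X₂ h₂, TensorProduct.sum_tmul, map_sum,
    conjTrace_apply, Fintype.sum_prod_type]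
  refine Finset.sum_congr rfl fun w₁ _ => ?_
  rw [TensorProduct.tmul_sum, map_sum]
  refine Finset.sum_congr rfl fun w₂ _ => ?_
  exact hψ.conjBy_apply (hW₁ w₁.2) (hW₁ (W₁.inv_mem w₁.2)) (hW₂ w₂.2) (hW₂ (W₂.inv_mem w₂.2))
    X₁ X₂

/-- The traces of the operators `m_t ∘ (μ₁ ⊗ μ₂)`, `t ∈ L₁ ⊗ L₂`, lie in any submodule containing
`ψ(𝒦₁ ⊗ 𝒦₂)`. -/
lemma IsProductEmbedding.conjTrace_gen_mem (hψ : IsProductEmbedding ι₁ ι₂ ext ψ)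
    [Fintype W₁] [Fintype W₂]
    (hM₁ : M₁ ≤ N₁) (hM₂ : M₂ ≤ N₂) (hW₁ : W₁.toSubmonoid ≤ N₁) (hW₂ : W₂.toSubmonoid ≤ N₂)
    (hinv₁ : ∀ w ∈ W₁, ∀ μ ∈ M₁, w * μ * w⁻¹ ∈ M₁)
    (hinv₂ : ∀ w ∈ W₂, ∀ μ ∈ M₂, w * μ * w⁻¹ ∈ M₂)
    {S : Submodule ℂ (Module.End ℂ L)}
    (hS : ∀ (X₁ : skew N₁) (X₂ : skew N₂), (X₁ : Module.End ℂ L₁) ∈ conjInv M₁ W₁ →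
      (X₂ : Module.End ℂ L₂) ∈ conjInv M₂ W₂ → ψ (X₁ ⊗ₜ[ℂ] X₂) ∈ S)
    {μ₁ : L₁ ≃ₐ[ℂ] L₁} {μ₂ : L₂ ≃ₐ[ℂ] L₂} (hμ₁ : μ₁ ∈ M₁) (hμ₂ : μ₂ ∈ M₂) {t : L}
    (ht : t ∈ tensorSub ⊤ ⊤ ι₁ ι₂) :
    conjTrace (prodAction ext W₁ W₂) (gen t (ext (μ₁, μ₂))) ∈ S := by
  refine tensorSub_induction (p := fun t => conjTrace (prodAction ext W₁ W₂)
    (gen t (ext (μ₁, μ₂))) ∈ S) (fun a _ b _ => ?_) (fun x y hx hy => ?_) ht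
  · have h₁ := conjTrace_mem_conjInv hinv₁ (gen_mem_skew a hμ₁)
    have h₂ := conjTrace_mem_conjInv hinv₂ (gen_mem_skew b hμ₂)
    rw [← hψ a b μ₁ μ₂ (hM₁ hμ₁) (hM₂ hμ₂),
      hψ.conjTrace_tmul hW₁ hW₂ _ _ (skew_mono hM₁ h₁.1) (skew_mono hM₂ h₂.1)]
    exact hS _ _ h₁ h₂
  · rw [gen_add, map_add]
    exact add_mem hx hy

/-- An invariant operator lies in a submodule containing the traces of all generators. -/
lemma conjInv_subset_of_conjTrace_mem [Fintype W₁] [Fintype W₂]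
    {S : Submodule ℂ (Module.End ℂ L)}
    (hS : ∀ (f : L), ∀ μ₁ ∈ M₁, ∀ μ₂ ∈ M₂,
      conjTrace (prodAction ext W₁ W₂) (gen f (ext (μ₁, μ₂))) ∈ S) :
    conjInv (Submonoid.map ext (M₁.prod M₂)) (Subgroup.map ext (W₁.prod W₂)) ⊆ S := by
  intro X hX
  refine mem_of_conjTrace_mem (prodAction ext W₁ W₂) (fun g => hX.2 _ (prodAction_mem g)) ?_
  refine skew_induction (p := fun X : skew (Submonoid.map ext (M₁.prod M₂)) =>
    conjTrace (prodAction ext W₁ W₂) (X : Module.End ℂ L) ∈ S) ?_ (fun X Y hX hY => ?_) ⟨X, hX.1⟩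
  · rintro f _ ⟨⟨μ₁, μ₂⟩, ⟨hμ₁, hμ₂⟩, rfl⟩
    exact hS f μ₁ hμ₁ μ₂ hμ₂
  · rw [Subalgebra.coe_add, map_add]
    exact add_mem hX hY

end Product

theorem principal_Galois_orders_closed_under_tensor
    {L₁ L₂ L : Type*} [Field L₁] [Algebra ℂ L₁] [Field L₂] [Algebra ℂ L₂]
    [Field L] [Algebra ℂ L]
    (Λ₁ : Subalgebra ℂ L₁) (Λ₂ : Subalgebra ℂ L₂)
    [IsFractionRing Λ₁ L₁] [IsFractionRing Λ₂ L₂]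
    -- Λᵢ integrally closed
    (hic₁ : IsIntegrallyClosed Λ₁) (hic₂ : IsIntegrallyClosed Λ₂)
    -- Wᵢ finite groups of automorphisms of Λᵢ
    (W₁ : Subgroup (L₁ ≃ₐ[ℂ] L₁)) (W₂ : Subgroup (L₂ ≃ₐ[ℂ] L₂))
    (hW₁fin : (W₁ : Set (L₁ ≃ₐ[ℂ] L₁)).Finite) (hW₂fin : (W₂ : Set (L₂ ≃ₐ[ℂ] L₂)).Finite)
    (hW₁ : ∀ w ∈ W₁, ∀ x : L₁, x ∈ Λ₁ ↔ w x ∈ Λ₁)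
    (hW₂ : ∀ w ∈ W₂, ∀ x : L₂, x ∈ Λ₂ ↔ w x ∈ Λ₂)
    -- 𝓜ᵢ submonoids of automorphisms of Λᵢ
    (M₁ : Submonoid (L₁ ≃ₐ[ℂ] L₁)) (M₂ : Submonoid (L₂ ≃ₐ[ℂ] L₂))
    (hM₁ : ∀ μ ∈ M₁, ∀ x : L₁, x ∈ Λ₁ ↔ μ x ∈ Λ₁)
    (hM₂ : ∀ μ ∈ M₂, ∀ x : L₂, x ∈ Λ₂ ↔ μ x ∈ Λ₂)
    -- separation: (𝓜ᵢ𝓜ᵢ⁻¹) ∩ Wᵢ = 1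
    (hsep₁ : ∀ μ ∈ M₁, ∀ ν ∈ M₁, μ * ν⁻¹ ∈ W₁ → μ * ν⁻¹ = 1)
    (hsep₂ : ∀ μ ∈ M₂, ∀ ν ∈ M₂, μ * ν⁻¹ ∈ W₂ → μ * ν⁻¹ = 1)
    -- invariance: ʷμ ∈ 𝓜ᵢ
    (hinv₁ : ∀ w ∈ W₁, ∀ μ ∈ M₁, w * μ * w⁻¹ ∈ M₁)
    (hinv₂ : ∀ w ∈ W₂, ∀ μ ∈ M₂, w * μ * w⁻¹ ∈ M₂)
    -- finiteness: Λᵢ is Noetherian as a module over Γᵢ = Λᵢ^{Wᵢ}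
    (hnoeth₁ : IsNoetherian ↥(fixedSub Λ₁ W₁) ↥(lambdaOver Λ₁ (fixedSub Λ₁ W₁) (fun _ hx => hx.1)))
    (hnoeth₂ : IsNoetherian ↥(fixedSub Λ₂ W₂) ↥(lambdaOver Λ₂ (fixedSub Λ₂ W₂) (fun _ hx => hx.1)))
    -- 𝒰ᵢ is a principal Galois Γᵢ-order in 𝒦ᵢ = (Lᵢ#𝓜ᵢ)^{Wᵢ}:
    (U₁ : Set (Module.End ℂ L₁)) (U₂ : Set (Module.End ℂ L₂))
    (hU₁K : U₁ ⊆ conjInv M₁ W₁) (hU₂K : U₂ ⊆ conjInv M₂ W₂)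
    (hU₁Γ : gammaMulSet (fixedSub Λ₁ W₁) ⊆ U₁)
    (hU₂Γ : gammaMulSet (fixedSub Λ₂ W₂) ⊆ U₂)
    -- finitely generated Γᵢ-subrings
    (hU₁fg : ∃ s : Finset (Module.End ℂ L₁), ↑s ⊆ U₁ ∧
      U₁ = ↑(Subring.closure (gammaMulSet (fixedSub Λ₁ W₁) ∪ ↑s)))
    (hU₂fg : ∃ s : Finset (Module.End ℂ L₂), ↑s ⊆ U₂ ∧
      U₂ = ↑(Subring.closure (gammaMulSet (fixedSub Λ₂ W₂) ∪ ↑s)))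
    -- Kᵢ𝒰ᵢ = 𝒰ᵢKᵢ = 𝒦ᵢ
    (hU₁left : conjInv M₁ W₁ = ↑(Submodule.span ℂ (leftMulSet (fixedSet W₁) U₁)))
    (hU₁right : conjInv M₁ W₁ = ↑(Submodule.span ℂ (rightMulSet (fixedSet W₁) U₁)))
    (hU₂left : conjInv M₂ W₂ = ↑(Submodule.span ℂ (leftMulSet (fixedSet W₂) U₂)))
    (hU₂right : conjInv M₂ W₂ = ↑(Submodule.span ℂ (rightMulSet (fixedSet W₂) U₂)))
    -- principality: X(γ) ∈ Γᵢ
    (hU₁pr : ∀ X ∈ U₁, ∀ γ ∈ fixedSub Λ₁ W₁, X γ ∈ fixedSub Λ₁ W₁)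
    (hU₂pr : ∀ X ∈ U₂, ∀ γ ∈ fixedSub Λ₂ W₂, X γ ∈ fixedSub Λ₂ W₂)
    -- the canonical realization of Λ₁ ⊗ Λ₂ inside L = Frac(Λ₁ ⊗ Λ₂)
    (ι₁ : L₁ →ₐ[ℂ] L) (ι₂ : L₂ →ₐ[ℂ] L)
    (hι : Function.Injective (Algebra.TensorProduct.productMap ι₁ ι₂))
    (hfrac : ∀ x : L, ∃ a ∈ tensorSub Λ₁ Λ₂ ι₁ ι₂, ∃ b ∈ tensorSub Λ₁ Λ₂ ι₁ ι₂,
      b ≠ 0 ∧ x = a / b)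
    (ext : ((L₁ ≃ₐ[ℂ] L₁) × (L₂ ≃ₐ[ℂ] L₂)) →* (L ≃ₐ[ℂ] L))
    (hext : ∀ (p : (L₁ ≃ₐ[ℂ] L₁) × (L₂ ≃ₐ[ℂ] L₂)) (f : L₁) (g : L₂),
      ext p (ι₁ f * ι₂ g) = ι₁ (p.1 f) * ι₂ (p.2 g))
    -- the canonical embedding ψ
    (ψ : (↥(skew (genMon W₁ M₁)) ⊗[ℂ] ↥(skew (genMon W₂ M₂))) →ₐ[ℂ] Module.End ℂ L)
    (hψ : ∀ (a : L₁) (b : L₂) (w₁ : L₁ ≃ₐ[ℂ] L₁) (w₂ : L₂ ≃ₐ[ℂ] L₂)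
        (h₁ : w₁ ∈ genMon W₁ M₁) (h₂ : w₂ ∈ genMon W₂ M₂),
      ψ (⟨gen a w₁, gen_mem_skew a h₁⟩ ⊗ₜ[ℂ] ⟨gen b w₂, gen_mem_skew b h₂⟩)
        = gen (ι₁ a * ι₂ b) (ext (w₁, w₂))) :
    -- ψ(𝒰₁ ⊗ 𝒰₂) is a principal Galois (Γ₁ ⊗ Γ₂)-order in 𝒦 = (L#(𝓜₁×𝓜₂))^{W₁×W₂}:
    -- it is contained in 𝒦 ...
    ((Submodule.map ψ.toLinearMap (pureSpan (genMon W₁ M₁) (genMon W₂ M₂) U₁ U₂) : Set (Module.End ℂ L)) ⊆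
      conjInv (Submonoid.map ext (M₁.prod M₂)) (Subgroup.map ext (W₁.prod W₂))) ∧
    -- ... it contains the multiplication operators by Γ = Γ₁ ⊗ Γ₂ ...
    (gammaMulSet (tensorSub (fixedSub Λ₁ W₁) (fixedSub Λ₂ W₂) ι₁ ι₂) ⊆
      ↑(Submodule.map ψ.toLinearMap (pureSpan (genMon W₁ M₁) (genMon W₂ M₂) U₁ U₂))) ∧
    -- ... it is a finitely generated (Γ₁ ⊗ Γ₂)-subring ...
    (∃ s : Finset (Module.End ℂ L),
      ↑s ⊆ (Submodule.map ψ.toLinearMap (pureSpan (genMon W₁ M₁) (genMon W₂ M₂) U₁ U₂) : Set (Module.End ℂ L)) ∧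
      (Submodule.map ψ.toLinearMap (pureSpan (genMon W₁ M₁) (genMon W₂ M₂) U₁ U₂) : Set (Module.End ℂ L)) =
        ↑(Subring.closure (gammaMulSet (tensorSub (fixedSub Λ₁ W₁) (fixedSub Λ₂ W₂) ι₁ ι₂) ∪ ↑s))) ∧
    -- ... with K·ψ(𝒰₁⊗𝒰₂) = ψ(𝒰₁⊗𝒰₂)·K = 𝒦 where K = L^{W₁×W₂} ...
    (conjInv (Submonoid.map ext (M₁.prod M₂)) (Subgroup.map ext (W₁.prod W₂)) =
      ↑(Submodule.span ℂ (leftMulSet (fixedSet (Subgroup.map ext (W₁.prod W₂)))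
        ↑(Submodule.map ψ.toLinearMap (pureSpan (genMon W₁ M₁) (genMon W₂ M₂) U₁ U₂))))) ∧
    (conjInv (Submonoid.map ext (M₁.prod M₂)) (Subgroup.map ext (W₁.prod W₂)) =
      ↑(Submodule.span ℂ (rightMulSet (fixedSet (Subgroup.map ext (W₁.prod W₂)))
        ↑(Submodule.map ψ.toLinearMap (pureSpan (genMon W₁ M₁) (genMon W₂ M₂) U₁ U₂))))) ∧
    -- ... and it is principal: X(γ) ∈ Γ₁ ⊗ Γ₂ for all γ ∈ Γ₁ ⊗ Γ₂
    (∀ Z ∈ Submodule.map ψ.toLinearMap (pureSpan (genMon W₁ M₁) (genMon W₂ M₂) U₁ U₂),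
      ∀ γ ∈ tensorSub (fixedSub Λ₁ W₁) (fixedSub Λ₂ W₂) ι₁ ι₂,
        Z γ ∈ tensorSub (fixedSub Λ₁ W₁) (fixedSub Λ₂ W₂) ι₁ ι₂) := by
  have hext' : IsProductExtension ι₁ ι₂ ext := hext
  have hψ' : IsProductEmbedding ι₁ ι₂ ext ψ := hψ
  have : Fintype W₁ := hW₁fin.fintype
  have : Fintype W₂ := hW₂fin.fintype
  have hMN₁ : M₁ ≤ genMon W₁ M₁ := fun _ h => Submonoid.subset_closure (Or.inr h)
  have hMN₂ : M₂ ≤ genMon W₂ M₂ := fun _ h => Submonoid.subset_closure (Or.inr h)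
  have hWN₁ : W₁.toSubmonoid ≤ genMon W₁ M₁ := fun _ h => Submonoid.subset_closure (Or.inl h)
  have hWN₂ : W₂.toSubmonoid ≤ genMon W₂ M₂ := fun _ h => Submonoid.subset_closure (Or.inl h)
  have hUN₁ : U₁ ⊆ skew (genMon W₁ M₁) := fun _ h => skew_mono hMN₁ (hU₁K h).1
  have hUN₂ : U₂ ⊆ skew (genMon W₂ M₂) := fun _ h => skew_mono hMN₂ (hU₂K h).1
  have hK := hψ'.map_pureSpan_subset_conjInv hMN₁ hMN₂ hWN₁ hWN₂ hU₁K hU₂K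
  have hfix : ∀ k ∈ fixedSet (Subgroup.map ext (W₁.prod W₂)), ∀ g,
      conjBy (prodAction ext W₁ W₂ g) (gen k 1) = gen k 1 := fun k hk g =>
    (gen_mem_conjInv (M := ⊤) hk).2 _ (prodAction_mem g)
  refine ⟨hK, hψ'.gammaMulSet_subset hU₁Γ hU₂Γ, ?_, ?_, ?_, ?_⟩
  · obtain ⟨s₁, -, rfl⟩ := hU₁fg
    obtain ⟨s₂, -, rfl⟩ := hU₂fg
    exact hψ'.exists_finset_closure_eq _ _ s₁ s₂ hUN₁ hUN₂
  · refine Set.Subset.antisymm (conjInv_subset_of_conjTrace_mem fun f μ₁ hμ₁ μ₂ hμ₂ => ?_)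
      (span_leftMulSet_le_conjInvSubmodule hK)
    obtain ⟨k, hk, t, ht, rfl⟩ := hext'.exists_eq_fixed_mul hfrac W₁ W₂ f
    have hgen : gen (k * t) (ext (μ₁, μ₂)) = gen k 1 * gen t (ext (μ₁, μ₂)) := by
      simp [gen_mul_gen]
    rw [hgen, conjTrace_mul_left _ (hfix k hk)]
    refine gen_mul_mem_span_leftMulSet hk (hψ'.conjTrace_gen_mem hMN₁ hMN₂ hWN₁ hWN₂ hinv₁ hinv₂
      (fun X₁ X₂ h₁ h₂ => ?_) hμ₁ hμ₂ ht)
    rw [hU₁left] at h₁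
    rw [hU₂left] at h₂
    exact hψ'.tmul_mem_span_leftMulSet hext' hUN₁ hUN₂ h₁ h₂
  · refine Set.Subset.antisymm (conjInv_subset_of_conjTrace_mem fun f μ₁ hμ₁ μ₂ hμ₂ => ?_)
      (span_rightMulSet_le_conjInvSubmodule hK)
    obtain ⟨k, hk, t, ht, hf⟩ :=
      hext'.exists_eq_fixed_mul hfrac W₁ W₂ ((ext (μ₁, μ₂))⁻¹ f)
    have hgen : gen f (ext (μ₁, μ₂)) = gen (ext (μ₁, μ₂) t) (ext (μ₁, μ₂)) * gen k 1 := by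
      have hf' : f = ext (μ₁, μ₂) (k * t) := by
        rw [← hf, ← AlgEquiv.mul_apply, mul_inv_cancel, AlgEquiv.one_apply]
      rw [gen_mul_gen, mul_one, ← map_mul, mul_comm t, ← hf']
    rw [hgen, conjTrace_mul_right _ (hfix k hk)]
    refine mul_gen_mem_span_rightMulSet hk (hψ'.conjTrace_gen_mem hMN₁ hMN₂ hWN₁ hWN₂ hinv₁ hinv₂
      (fun X₁ X₂ h₁ h₂ => ?_) hμ₁ hμ₂ (hext'.map_mem_tensorSub _ ht))
    rw [hU₁right] at h₁
    rw [hU₂right] at h₂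
    exact hψ'.tmul_mem_span_rightMulSet hext' hUN₁ hUN₂ h₁ h₂
  · rintro _ ⟨t, ht, rfl⟩ γ hγ
    refine tensorSub_induction (p := fun γ => ψ.toLinearMap t γ ∈
      tensorSub (fixedSub Λ₁ W₁) (fixedSub Λ₂ W₂) ι₁ ι₂) (fun a ha b hb => ?_)
      (fun x y hx hy => ?_) hγ
    · induction ht using Submodule.span_induction with
      | mem t ht =>
        obtain ⟨X₁, X₂, h₁, h₂, rfl⟩ := ht
        rw [AlgHom.toLinearMap_apply, hψ'.apply_mul hext']
        exact mul_mem_tensorSub (hU₁pr _ h₁ a ha) (hU₂pr _ h₂ b hb)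
      | zero =>
        rw [map_zero, LinearMap.zero_apply]
        exact zero_mem _
      | add x y _ _ hx hy =>
        rw [map_add, LinearMap.add_apply]
        exact add_mem hx hy
      | smul c x _ hx =>
        rw [map_smul, LinearMap.smul_apply]
        exact Subalgebra.smul_mem _ hx c
    · rw [map_add]
      exact add_mem hx hy
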